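/- arXiv:2506.22731 — 2 statements merged into one kernel-verified Lean document; each statement's English description precedes it below -/
import Mathlib

section
/- Let φ : ℝ → ℝ be a smooth function satisfying the graph-like forward self-similar profile equation. Then for every x ∈ ℝ, (1/v(x))·d/dx[ (1/v(x))·d/dx( k(x)² + (x² + φ(x)²)/4 ) ] = 1/2 + 2·( k'(x)/v(x) )², i.e. ∂ₛ²( k² + |x|²/4 ) = 1/2 + 2(∂ₛk)² along the graph of φ. -/
/-! Write `X = (x, φ x)` for the position vector and `ν = (-φ', 1) / v` for the upward unit normal.
Both `k²` and `|X|²` are sums of squares, and `∂ₛ²(f²) = 2 (∂ₛf)² + 2 f ∂ₛ²f`. Since `|∂ₛX| = 1` and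
`∂ₛ²X = k ν`, this gives `∂ₛ²(|X|²/4) = 1/2 + k ⟨X, ν⟩/2`. The profile equation says
`∂ₛ²k = -⟨X, ν⟩/4`, so the term `2 k ∂ₛ²k` of `∂ₛ²(k²)` cancels `k ⟨X, ν⟩/2`. -/

open Filter Topology

section ArclengthDeriv

/-- The derivative with respect to arclength of a function `f` of the parameter of a curve, where
`v` is the speed of the parametrisation. -/
noncomputable def arclengthDeriv (v f : ℝ → ℝ) : ℝ → ℝ := fun x => 1 / v x * deriv f x

variable {v f g : ℝ → ℝ} {x : ℝ}

lemma arclengthDeriv_eq_div (v f : ℝ → ℝ) : arclengthDeriv v f = fun x => deriv f x / v x :=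
  funext fun _ => one_div_mul_eq_div _ _

lemma arclengthDeriv_id (v : ℝ → ℝ) : arclengthDeriv v (fun t => t) = fun t => 1 / v t := by
  rw [arclengthDeriv_eq_div, deriv_id'']

lemma arclengthDeriv_congr (h : f =ᶠ[𝓝 x] g) : arclengthDeriv v f x = arclengthDeriv v g x := by
  rw [arclengthDeriv, arclengthDeriv, h.deriv_eq]

lemma arclengthDeriv_add (hf : DifferentiableAt ℝ f x) (hg : DifferentiableAt ℝ g x) :
    arclengthDeriv v (fun t => f t + g t) x = arclengthDeriv v f x + arclengthDeriv v g x := by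
  rw [arclengthDeriv, arclengthDeriv, arclengthDeriv, deriv_fun_add hf hg, mul_add]

lemma arclengthDeriv_mul (hf : DifferentiableAt ℝ f x) (hg : DifferentiableAt ℝ g x) :
    arclengthDeriv v (fun t => f t * g t) x =
      arclengthDeriv v f x * g x + f x * arclengthDeriv v g x := by
  rw [arclengthDeriv, arclengthDeriv, arclengthDeriv, deriv_fun_mul hf hg]
  ring

lemma arclengthDeriv_div_const (v f : ℝ → ℝ) (c : ℝ) :
    arclengthDeriv v (fun t => f t / c) = fun t => arclengthDeriv v f t / c := by
  ext t
  rw [arclengthDeriv, arclengthDeriv, deriv_div_const, mul_div_assoc]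

lemma differentiableAt_arclengthDeriv (hf : ContDiffAt ℝ 2 f x) (hv : DifferentiableAt ℝ v x)
    (hvx : v x ≠ 0) : DifferentiableAt ℝ (arclengthDeriv v f) x :=
  ((differentiableAt_const 1).fun_div hv hvx).fun_mul
    ((hf.derivWithin (m := 1) (by norm_num)).differentiableAt one_ne_zero)

lemma arclengthDeriv_arclengthDeriv_add (hf : ContDiffAt ℝ 2 f x) (hg : ContDiffAt ℝ 2 g x)
    (hv : DifferentiableAt ℝ v x) (hvx : v x ≠ 0) :
    arclengthDeriv v (arclengthDeriv v fun t => f t + g t) x =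
      arclengthDeriv v (arclengthDeriv v f) x + arclengthDeriv v (arclengthDeriv v g) x := by
  have h_first : arclengthDeriv v (fun t => f t + g t) =ᶠ[𝓝 x]
      fun t => arclengthDeriv v f t + arclengthDeriv v g t := by
    filter_upwards [hf.eventually (by decide), hg.eventually (by decide)] with t hft hgt
    exact arclengthDeriv_add (hft.differentiableAt two_ne_zero) (hgt.differentiableAt two_ne_zero)
  rw [arclengthDeriv_congr h_first, arclengthDeriv_add
    (differentiableAt_arclengthDeriv hf hv hvx) (differentiableAt_arclengthDeriv hg hv hvx)]

lemma arclengthDeriv_arclengthDeriv_sq (hf : ContDiffAt ℝ 2 f x) (hv : DifferentiableAt ℝ v x)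
    (hvx : v x ≠ 0) :
    arclengthDeriv v (arclengthDeriv v fun t => f t ^ 2) x =
      2 * arclengthDeriv v f x ^ 2 + 2 * f x * arclengthDeriv v (arclengthDeriv v f) x := by
  have h_first : arclengthDeriv v (fun t => f t ^ 2) =ᶠ[𝓝 x]
      fun t => f t * arclengthDeriv v f t + f t * arclengthDeriv v f t := by
    filter_upwards [hf.eventually (by decide)] with t hft
    have hft' := hft.differentiableAt two_ne_zero
    simp only [pow_two]
    rw [arclengthDeriv_mul hft' hft', mul_comm (arclengthDeriv v f t)]
  have hf₀ := hf.differentiableAt two_ne_zero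
  have hf₁ := differentiableAt_arclengthDeriv hf hv hvx
  rw [arclengthDeriv_congr h_first, arclengthDeriv_add (hf₀.fun_mul hf₁) (hf₀.fun_mul hf₁),
    arclengthDeriv_mul hf₀ hf₁]
  ring

end ArclengthDeriv

section Graph

/-- The speed `v` of the parametrisation `t ↦ (t, φ t)` of the graph of `φ`. -/
noncomputable def graphSpeed (φ : ℝ → ℝ) : ℝ → ℝ := fun x => √(1 + deriv φ x ^ 2)

/-- The signed curvature `k` of the graph of `φ` with respect to the upward unit normal
`ν = (-φ', 1) / v`. -/
noncomputable def graphCurvature (φ : ℝ → ℝ) : ℝ → ℝ :=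
  fun x => deriv (deriv φ) x / graphSpeed φ x ^ 3

/-- The support function `⟨X, ν⟩` of the graph of `φ`: the component of the position vector
`X = (x, φ x)` along the upward unit normal `ν`. -/
noncomputable def graphSupport (φ : ℝ → ℝ) : ℝ → ℝ :=
  fun x => (φ x - x * deriv φ x) / graphSpeed φ x

variable {φ : ℝ → ℝ} {x : ℝ}

lemma graphSpeed_sq (φ : ℝ → ℝ) (x : ℝ) : graphSpeed φ x ^ 2 = 1 + deriv φ x ^ 2 :=
  Real.sq_sqrt (by positivity)

lemma graphSpeed_ne_zero (φ : ℝ → ℝ) (x : ℝ) : graphSpeed φ x ≠ 0 :=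
  Real.sqrt_ne_zero'.2 (by positivity)

lemma contDiffAt_graphSpeed {n : WithTop ℕ∞} (hφ : ContDiffAt ℝ (n + 1) φ x) :
    ContDiffAt ℝ n (graphSpeed φ) x :=
  (contDiffAt_const.add ((hφ.derivWithin le_rfl).pow 2)).sqrt (by positivity)

lemma contDiffAt_graphCurvature {n : WithTop ℕ∞} (hφ : ContDiffAt ℝ (n + 1 + 1) φ x) :
    ContDiffAt ℝ n (graphCurvature φ) x :=
  ((hφ.derivWithin le_rfl).derivWithin le_rfl).fun_div
    ((contDiffAt_graphSpeed (hφ.of_le le_self_add)).pow 3) (pow_ne_zero 3 (graphSpeed_ne_zero φ x))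

lemma hasDerivAt_graphSpeed (hφ : DifferentiableAt ℝ (deriv φ) x) :
    HasDerivAt (graphSpeed φ) (deriv φ x * deriv (deriv φ) x / graphSpeed φ x) x := by
  have h := ((hφ.hasDerivAt.fun_pow 2).const_add 1).sqrt (by positivity)
  refine h.congr_deriv ?_
  change _ / (2 * graphSpeed φ x) = _
  field_simp
  ring

lemma differentiableAt_graphSpeed (hφ : ContDiffAt ℝ 2 φ x) :
    DifferentiableAt ℝ (graphSpeed φ) x :=
  (contDiffAt_graphSpeed (hφ.of_le (by norm_num))).differentiableAt_one

lemma arclengthDeriv_graphSpeed_sq_add_sq (φ : ℝ → ℝ) (x : ℝ) :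
    arclengthDeriv (graphSpeed φ) (fun t => t) x ^ 2 +
      arclengthDeriv (graphSpeed φ) φ x ^ 2 = 1 := by
  have hv := graphSpeed_ne_zero φ x
  rw [arclengthDeriv_id, arclengthDeriv]
  field_simp
  exact (graphSpeed_sq φ x).symm

lemma arclengthDeriv_arclengthDeriv_graph_fst (hφ : DifferentiableAt ℝ (deriv φ) x) :
    arclengthDeriv (graphSpeed φ) (arclengthDeriv (graphSpeed φ) fun t => t) x =
      graphCurvature φ x * (-deriv φ x / graphSpeed φ x) := by
  have hv := graphSpeed_ne_zero φ x
  have h := (hasDerivAt_const x (1 : ℝ)).fun_div (hasDerivAt_graphSpeed hφ) hv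
  rw [arclengthDeriv_id, arclengthDeriv, h.deriv, graphCurvature]
  field_simp
  ring

lemma arclengthDeriv_arclengthDeriv_graph_snd (hφ : DifferentiableAt ℝ (deriv φ) x) :
    arclengthDeriv (graphSpeed φ) (arclengthDeriv (graphSpeed φ) φ) x =
      graphCurvature φ x * (1 / graphSpeed φ x) := by
  have hv := graphSpeed_ne_zero φ x
  have h := ((hasDerivAt_const x (1 : ℝ)).fun_div (hasDerivAt_graphSpeed hφ) hv).fun_mul
    hφ.hasDerivAt
  rw [arclengthDeriv, HasDerivAt.deriv (f := arclengthDeriv (graphSpeed φ) φ) h, graphCurvature]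
  field_simp
  linear_combination deriv (deriv φ) x * graphSpeed_sq φ x

lemma arclengthDeriv_arclengthDeriv_normSq_graph (hφ : ContDiffAt ℝ 2 φ x) :
    arclengthDeriv (graphSpeed φ) (arclengthDeriv (graphSpeed φ) fun t => t ^ 2 + φ t ^ 2) x =
      2 + 2 * graphCurvature φ x * graphSupport φ x := by
  have hφ' : DifferentiableAt ℝ (deriv φ) x :=
    (hφ.derivWithin (m := 1) (by norm_num)).differentiableAt one_ne_zero
  have hv := differentiableAt_graphSpeed hφ
  have hv₀ := graphSpeed_ne_zero φ x
  rw [arclengthDeriv_arclengthDeriv_add (contDiffAt_fun_id.pow 2) (hφ.pow 2) hv hv₀,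
    arclengthDeriv_arclengthDeriv_sq contDiffAt_fun_id hv hv₀,
    arclengthDeriv_arclengthDeriv_sq hφ hv hv₀, arclengthDeriv_arclengthDeriv_graph_fst hφ',
    arclengthDeriv_arclengthDeriv_graph_snd hφ', graphSupport]
  linear_combination 2 * arclengthDeriv_graphSpeed_sq_add_sq φ x

lemma arclengthDeriv_arclengthDeriv_graphCurvature_sq_add_normSq (hφ : ContDiffAt ℝ 4 φ x) :
    arclengthDeriv (graphSpeed φ) (arclengthDeriv (graphSpeed φ)
        fun t => graphCurvature φ t ^ 2 + (t ^ 2 + φ t ^ 2) / 4) x =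
      1 / 2 + 2 * arclengthDeriv (graphSpeed φ) (graphCurvature φ) x ^ 2 +
        2 * graphCurvature φ x * (graphSupport φ x / 4 +
          arclengthDeriv (graphSpeed φ) (arclengthDeriv (graphSpeed φ) (graphCurvature φ)) x) := by
  have hφ₂ : ContDiffAt ℝ 2 φ x := hφ.of_le (by norm_num)
  have hk : ContDiffAt ℝ 2 (graphCurvature φ) x :=
    contDiffAt_graphCurvature (hφ.of_le (by norm_num))
  have hv := differentiableAt_graphSpeed hφ₂
  have hv₀ := graphSpeed_ne_zero φ x
  rw [arclengthDeriv_arclengthDeriv_add (hk.pow 2)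
      (((contDiffAt_fun_id.pow 2).add (hφ₂.pow 2)).div_const 4) hv hv₀,
    arclengthDeriv_arclengthDeriv_sq hk hv hv₀]
  simp only [arclengthDeriv_div_const]
  rw [arclengthDeriv_arclengthDeriv_normSq_graph hφ₂]
  ring

lemma arclengthDeriv_arclengthDeriv_graphCurvature_of_profile
    (hprofile : (φ x - x * deriv φ x) / 4 =
      -deriv (fun t => deriv (graphCurvature φ) t / graphSpeed φ t) x) :
    arclengthDeriv (graphSpeed φ) (arclengthDeriv (graphSpeed φ) (graphCurvature φ)) x =
      -(graphSupport φ x / 4) := by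
  simp only [arclengthDeriv_eq_div, ← neg_eq_iff_eq_neg.2 hprofile, graphSupport]
  ring

end Graph

theorem stmt_4_general {φ : ℝ → ℝ} {x : ℝ} (hφ : ContDiffAt ℝ 4 φ x)
    (hprofile : (φ x - x * deriv φ x) / 4 =
      -deriv (fun t => deriv (graphCurvature φ) t / graphSpeed φ t) x) :
    arclengthDeriv (graphSpeed φ) (arclengthDeriv (graphSpeed φ)
        fun t => graphCurvature φ t ^ 2 + (t ^ 2 + φ t ^ 2) / 4) x =
      1 / 2 + 2 * (deriv (graphCurvature φ) x / graphSpeed φ x) ^ 2 := by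
  rw [arclengthDeriv_arclengthDeriv_graphCurvature_sq_add_normSq hφ,
    arclengthDeriv_arclengthDeriv_graphCurvature_of_profile hprofile, add_neg_cancel, mul_zero,
    add_zero, arclengthDeriv_eq_div]

/-- For a smooth graph-like forward self-similar profile `φ`, with
`v = √(1 + φ'²)`, curvature `k = φ''/v³` and arclength derivative `∂ₛ f = f'/v`,
one has `∂ₛ²(k² + |x|²/4) = 1/2 + 2 (∂ₛ k)²` along the graph of `φ`. -/
theorem stmt_4 (φ v k : ℝ → ℝ) (hφ : ContDiff ℝ (⊤ : ℕ∞) φ)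
    (hv : ∀ x, v x = Real.sqrt (1 + deriv φ x ^ 2))
    (hk : ∀ x, k x = deriv (deriv φ) x / v x ^ 3)
    (hprofile : ∀ x : ℝ,
      (φ x - x * deriv φ x) / 4 = -deriv (fun t => deriv k t / v t) x) :
    ∀ x : ℝ,
      (1 / v x) * deriv (fun t => (1 / v t) *
          deriv (fun u => k u ^ 2 + (u ^ 2 + φ u ^ 2) / 4) t) x
        = 1 / 2 + 2 * (deriv k x / v x) ^ 2 := by
  obtain rfl : v = graphSpeed φ := funext hv
  obtain rfl : k = graphCurvature φ := funext hk
  exact fun x => stmt_4_general (contDiff_infty.1 hφ 4).contDiffAt (hprofile x)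
end

section
/- Let φ : ℝ → ℝ be a smooth function satisfying the graph-like forward self-similar profile equation. Assume φ is globally Lipschitz (i.e. φ' is bounded on ℝ) and φ' − a₀ is integrable on ℝ for some a₀ ∈ ℝ. Then φ(x₁) = a₀·x₁ for all x₁ ∈ ℝ. -/
/-!
Write `u = φ'`, `w x = φ x - a x`, `p = ∂ₛk`, `F u = √(1 + u²)`, and let
`D(u, a) = F u - F a - F' a (u - a) ≥ 0` be the Bregman divergence of the convex function `F`.
Along a profile, the flux `J = 4 p k + w (F' u - F' a) - x D(a, u)` satisfies
`J' = 4 F(u) p² + D(u, a)`. If `J` vanished at infinity, this would force `D(u, a) = 0`, hence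
`u = a`. To avoid proving any decay, multiply by `η⁴` for the cutoff `η = 1 - (x / R)²`: the term
`-x D(a, u) (η⁴)'` has the favourable sign, the curvature term `16 p k η³ η'` is absorbed by adding
the total derivative of `64 (F' u - F' a) k (η η')²`, and everything that remains is bounded by
`C |u - a| / R`, whose integral over `[-R, R]` tends to zero.
-/

open MeasureTheory Filter Topology Set

namespace SurfaceDiffusion

theorem exists_norm_le_of_hasDerivAt_of_integrable {E : Type*} [NormedAddCommGroup E]
    [NormedSpace ℝ E] [CompleteSpace E] {f f' : ℝ → E} (hf : ∀ x, HasDerivAt f (f' x) x)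
    (hf' : Integrable f') : ∃ M, ∀ x, ‖f x‖ ≤ M := by
  refine ⟨‖f 0‖ + ∫ t, ‖f' t‖, fun x => ?_⟩
  have increment : ∫ t in (0 : ℝ)..x, f' t = f x - f 0 :=
    intervalIntegral.integral_eq_sub_of_hasDerivAt (fun y _ => hf y) hf'.intervalIntegrable
  have increment_le : ‖f x - f 0‖ ≤ ∫ t, ‖f' t‖ := by
    rw [← increment]
    exact intervalIntegral.norm_integral_le_integral_norm_uIoc.trans
      (setIntegral_le_integral hf'.norm (ae_of_all _ fun t => norm_nonneg _))
  linarith [norm_le_norm_add_norm_sub' (f x) (f 0)]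

/-- The parabolic cutoff vanishing at `±R`. It is used on `[-R, R]` only, so no truncation is
needed. -/
noncomputable def cutoff (R x : ℝ) : ℝ := 1 - (x / R) ^ 2

theorem hasDerivAt_cutoff (R x : ℝ) : HasDerivAt (cutoff R) (-2 * x / R ^ 2) x := by
  refine ((((hasDerivAt_id x).div_const R).pow 2).const_sub 1).congr_deriv ?_
  simp only [id]
  ring

theorem hasDerivAt_deriv_cutoff (R x : ℝ) :
    HasDerivAt (fun x => -2 * x / R ^ 2) (-2 / R ^ 2) x := by
  simpa using ((hasDerivAt_id x).const_mul (-2)).div_const (R ^ 2)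

theorem cutoff_of_abs_eq {R x : ℝ} (hR : 0 < R) (hx : |x| = R) : cutoff R x = 0 := by
  rw [cutoff, ← sq_abs, abs_div, hx, abs_of_pos hR, div_self hR.ne']
  norm_num

theorem cutoff_mem_Icc {R x : ℝ} (hx : |x| ≤ R) : cutoff R x ∈ Icc 0 1 := by
  have : (x / R) ^ 2 ≤ 1 := by
    rw [div_pow, ← sq_abs]
    exact div_le_one_of_le₀ (pow_le_pow_left₀ (abs_nonneg x) hx 2) (sq_nonneg R)
  exact ⟨sub_nonneg.2 this, sub_le_self _ (sq_nonneg _)⟩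

theorem mul_deriv_cutoff_nonpos (R x : ℝ) : x * (-2 * x / R ^ 2) ≤ 0 := by
  have : 0 ≤ 2 * (x / R) ^ 2 := by positivity
  calc x * (-2 * x / R ^ 2) = -(2 * (x / R) ^ 2) := by ring
    _ ≤ 0 := neg_nonpos.2 this

theorem abs_deriv_cutoff_le {R x : ℝ} (hR : 0 < R) (hx : |x| ≤ R) :
    |-2 * x / R ^ 2| ≤ 2 * R⁻¹ := by
  rw [abs_div, abs_mul, abs_neg, abs_two, abs_of_pos (pow_pos hR 2)]
  calc 2 * |x| / R ^ 2 ≤ 2 * R / R ^ 2 := by gcongr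
    _ = 2 * R⁻¹ := by field_simp

theorem continuous_cutoff (R : ℝ) : Continuous (cutoff R) := by
  unfold cutoff
  fun_prop

theorem integral_le_four_mul_integral_mul_cutoff {f : ℝ → ℝ} (hf : Continuous f)
    (hf0 : ∀ x, 0 ≤ f x) {r R : ℝ} (hr : 0 < r) (hR : 2 * r ≤ R) :
    ∫ x in (-r)..r, f x ≤ 4 * ∫ x in (-R)..R, f x * cutoff R x ^ 4 := by
  have hcont : Continuous fun x => 4 * (f x * cutoff R x ^ 4) := by
    have := continuous_cutoff R
    fun_prop
  have le_on_half : ∀ x ∈ Icc (-r) r, f x ≤ 4 * (f x * cutoff R x ^ 4) := fun x hx => by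
    have hxR : |x / R| ≤ 1 / 2 := by
      rw [abs_div, abs_of_pos (by linarith : 0 < R), div_le_iff₀ (by linarith)]
      linarith [abs_le.2 hx]
    have hη : 3 / 4 ≤ cutoff R x := by
      have := sq_le_sq.2 (hxR.trans (le_abs_self _))
      rw [cutoff]
      linarith
    have := pow_le_pow_left₀ (by norm_num) hη 4
    nlinarith [hf0 x]
  calc ∫ x in (-r)..r, f x
      ≤ ∫ x in (-r)..r, 4 * (f x * cutoff R x ^ 4) :=
        intervalIntegral.integral_mono_on (by linarith) (hf.intervalIntegrable _ _)
          (hcont.intervalIntegrable _ _) le_on_half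
    _ ≤ ∫ x in (-R)..R, 4 * (f x * cutoff R x ^ 4) :=
        intervalIntegral.integral_mono_interval (by linarith) (by linarith) (by linarith)
          (ae_of_all _ fun x => by have := hf0 x; positivity) (hcont.intervalIntegrable _ _)
    _ = 4 * ∫ x in (-R)..R, f x * cutoff R x ^ 4 := intervalIntegral.integral_const_mul _ _

theorem eq_zero_of_integral_mul_cutoff_le {f : ℝ → ℝ} (hf : Continuous f) (hf0 : ∀ x, 0 ≤ f x)
    {C : ℝ} (hC : ∀ R, 1 ≤ R → ∫ x in (-R)..R, f x * cutoff R x ^ 4 ≤ C / R) (x : ℝ) :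
    f x = 0 := by
  by_contra hne
  have hr : 0 < |x| + 1 := by positivity
  have hpos : 0 < ∫ y in (-(|x| + 1))..(|x| + 1), f y :=
    intervalIntegral.integral_pos (by linarith) hf.continuousOn (fun y _ => hf0 y)
      ⟨x, abs_le.1 (by linarith), (hf0 x).lt_of_ne' hne⟩
  have hlim : Tendsto (fun R => 4 * (C / R)) atTop (𝓝 0) := by
    simpa using (tendsto_const_nhds.div_atTop tendsto_id).const_mul (4 : ℝ)
  refine hpos.not_ge (ge_of_tendsto hlim ?_)
  filter_upwards [eventually_ge_atTop (2 * (|x| + 1))] with R hR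
  exact (integral_le_four_mul_integral_mul_cutoff hf hf0 hr hR).trans
    (by linarith [hC R (by linarith [abs_nonneg x])])

section ArclengthDensity

variable (u a : ℝ)

/-- The length of the graph per unit of abscissa at a point of slope `u`. -/
noncomputable def arclengthDensity : ℝ := √(1 + u ^ 2)

/-- The sine of the inclination angle at a point of slope `u`. -/
noncomputable def slopeSine : ℝ := u / arclengthDensity u

/-- The Bregman divergence of `arclengthDensity`: its excess at `u` over the tangent line at
`a`. -/
noncomputable def arclengthBregman : ℝ :=
  arclengthDensity u - arclengthDensity a - slopeSine a * (u - a)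

theorem one_le_arclengthDensity : 1 ≤ arclengthDensity u :=
  Real.one_le_sqrt.2 (by nlinarith [sq_nonneg u])

theorem arclengthDensity_pos : 0 < arclengthDensity u :=
  zero_lt_one.trans_le (one_le_arclengthDensity u)

theorem arclengthDensity_sq : arclengthDensity u ^ 2 = 1 + u ^ 2 :=
  Real.sq_sqrt (by positivity)

theorem hasDerivAt_arclengthDensity : HasDerivAt arclengthDensity (slopeSine u) u := by
  refine (((hasDerivAt_pow 2 u).const_add 1).sqrt (by positivity)).congr_deriv ?_
  rw [slopeSine, arclengthDensity]
  push_cast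
  field_simp

theorem arclengthDensity_mul_slopeSine : arclengthDensity u * slopeSine u = u :=
  mul_div_cancel₀ u (arclengthDensity_pos u).ne'

theorem hasDerivAt_slopeSine : HasDerivAt slopeSine (1 / arclengthDensity u ^ 3) u := by
  have hF := (arclengthDensity_pos u).ne'
  refine ((hasDerivAt_id u).div (hasDerivAt_arclengthDensity u) hF).congr_deriv ?_
  simp only [id, slopeSine]
  field_simp
  linear_combination arclengthDensity_sq u

theorem abs_slopeSine_le_one : |slopeSine u| ≤ 1 := by
  rw [slopeSine, abs_div, abs_of_pos (arclengthDensity_pos u), div_le_one (arclengthDensity_pos u)]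
  exact Real.abs_le_sqrt (by linarith)

theorem abs_slopeSine_sub_slopeSine_le_two : |slopeSine u - slopeSine a| ≤ 2 :=
  (abs_sub _ _).trans (by linarith [abs_slopeSine_le_one u, abs_slopeSine_le_one a])

theorem arclengthBregman_self : arclengthBregman a a = 0 := by
  simp [arclengthBregman]

variable {u a} in
theorem arclengthBregman_pos (h : u ≠ a) : 0 < arclengthBregman u a := by
  have hF := arclengthDensity_pos a
  have cauchy_schwarz : 1 + u * a < arclengthDensity u * arclengthDensity a := by
    refine lt_of_pow_lt_pow_left₀ 2 (by have := arclengthDensity_pos u; positivity) ?_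
    rw [mul_pow, arclengthDensity_sq, arclengthDensity_sq]
    nlinarith [sq_pos_of_ne_zero (sub_ne_zero.2 h)]
  have mul_eq : arclengthDensity a * arclengthBregman u a =
      arclengthDensity u * arclengthDensity a - (1 + u * a) := by
    rw [arclengthBregman]
    linear_combination
      (a - u) * arclengthDensity_mul_slopeSine a - arclengthDensity_sq a
  exact pos_of_mul_pos_right (by linarith) hF.le

theorem arclengthBregman_nonneg : 0 ≤ arclengthBregman u a := by
  rcases eq_or_ne u a with rfl | h
  · exact (arclengthBregman_self u).ge
  · exact (arclengthBregman_pos h).le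

theorem arclengthBregman_add_swap :
    arclengthBregman u a + arclengthBregman a u = (u - a) * (slopeSine u - slopeSine a) := by
  rw [arclengthBregman, arclengthBregman]
  ring

theorem hasDerivAt_arclengthBregman_right :
    HasDerivAt (arclengthBregman a) ((u - a) / arclengthDensity u ^ 3) u := by
  refine (((hasDerivAt_arclengthDensity u).const_sub _).sub
    ((hasDerivAt_slopeSine u).mul ((hasDerivAt_id u).const_sub a))).congr_deriv ?_
  simp only [id]
  ring

theorem abs_arclengthDensity_sub_le : |arclengthDensity u - arclengthDensity a| ≤ |u - a| := by
  have tangent_le (x y : ℝ) : arclengthDensity x - arclengthDensity y ≤ |x - y| := by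
    calc arclengthDensity x - arclengthDensity y
        ≤ slopeSine x * (x - y) := by
          have := arclengthBregman_nonneg y x
          rw [arclengthBregman] at this
          linarith
      _ ≤ |slopeSine x| * |x - y| := (le_abs_self _).trans (abs_mul _ _).le
      _ ≤ |x - y| := mul_le_of_le_one_left (abs_nonneg _) (abs_slopeSine_le_one x)
  exact abs_sub_le_iff.2 ⟨tangent_le u a, abs_sub_comm u a ▸ tangent_le a u⟩

theorem arclengthDensity_mul_abs_slopeSine_sub_le :
    arclengthDensity u * |slopeSine u - slopeSine a| ≤ 2 * |u - a| := by
  have key : arclengthDensity u * (slopeSine u - slopeSine a) =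
      (u - a) - slopeSine a * (arclengthDensity u - arclengthDensity a) := by
    linear_combination arclengthDensity_mul_slopeSine u - arclengthDensity_mul_slopeSine a
  calc arclengthDensity u * |slopeSine u - slopeSine a|
      = |(u - a) - slopeSine a * (arclengthDensity u - arclengthDensity a)| := by
        rw [← key, abs_mul, abs_of_pos (arclengthDensity_pos u)]
    _ ≤ |u - a| + |slopeSine a| * |arclengthDensity u - arclengthDensity a| :=
        (abs_sub _ _).trans (by rw [abs_mul])
    _ ≤ |u - a| + 1 * |u - a| :=
        add_le_add_right (mul_le_mul (abs_slopeSine_le_one a) (abs_arclengthDensity_sub_le u a)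
          (abs_nonneg _) zero_le_one) _
    _ = 2 * |u - a| := by ring

theorem abs_slopeSine_sub_le : |slopeSine u - slopeSine a| ≤ 2 * |u - a| :=
  (le_mul_of_one_le_left (abs_nonneg _) (one_le_arclengthDensity u)).trans
    (arclengthDensity_mul_abs_slopeSine_sub_le u a)

theorem arclengthDensity_mul_slopeSine_sub_sq_le :
    arclengthDensity u * (slopeSine u - slopeSine a) ^ 2 ≤ 4 * |u - a| := by
  rw [← sq_abs, sq, ← mul_assoc]
  linarith [mul_le_mul (arclengthDensity_mul_abs_slopeSine_sub_le u a)
    (abs_slopeSine_sub_slopeSine_le_two u a) (abs_nonneg _) (by positivity)]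

theorem slopeSine_sub_sq_le : (slopeSine u - slopeSine a) ^ 2 ≤ 4 * |u - a| :=
  (le_mul_of_one_le_left (sq_nonneg _) (one_le_arclengthDensity u)).trans
    (arclengthDensity_mul_slopeSine_sub_sq_le u a)

end ArclengthDensity

/-- The profile equation as a first-order system: `φ` has slope `u`, curvature `k` and arclength
derivative of curvature `p`. -/
structure IsProfileSolution (φ u k p : ℝ → ℝ) : Prop where
  hasDerivAt_profile (x : ℝ) : HasDerivAt φ (u x) x
  hasDerivAt_slope (x : ℝ) : HasDerivAt u (k x * arclengthDensity (u x) ^ 3) x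
  hasDerivAt_curvature (x : ℝ) : HasDerivAt k (arclengthDensity (u x) * p x) x
  hasDerivAt_curvature_arclength (x : ℝ) : HasDerivAt p ((x * u x - φ x) / 4) x

/-- The flux whose derivative along a profile is the sum of the dissipation `4 (∂ₛk)² ds` and the
Bregman divergence of the slope from `a`. -/
noncomputable def energyFlux (φ u k p : ℝ → ℝ) (a x : ℝ) : ℝ :=
  4 * (p x * k x) + (φ x - a * x) * (slopeSine (u x) - slopeSine a)
    - x * arclengthBregman a (u x)

/-- The energy flux cut off by `η ^ 4`, corrected by a term whose derivative supplies the square of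
the curvature. The derivative `η'` of `η` is passed as a separate argument. -/
noncomputable def localizedFlux (φ u k p : ℝ → ℝ) (a : ℝ) (η η' : ℝ → ℝ) (x : ℝ) : ℝ :=
  energyFlux φ u k p a x * η x ^ 4
    + 64 * ((slopeSine (u x) - slopeSine a) * k x * (η x * η' x) ^ 2)

-- Used with `a = p η²`, `b = k η η'`, `c = h η'²` and `d = h η η''`, where `h` is the difference of
-- the slope sines. Any factor above `16` in place of `64` would let `b²` absorb `16 a b`.
theorem neg_error_le_dissipation {v : ℝ} (hv : 1 ≤ v) (a b c d : ℝ) :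
    -(768 * (v * c ^ 2) + 256 * d ^ 2) ≤
      4 * v * a ^ 2 + 16 * a * b + 64 * (b ^ 2 + v * a * c + 2 * b * c + 2 * b * d) := by
  have weighted_square : 0 ≤ 2 * v * (a + 16 * c) ^ 2 := by positivity
  have weight_c : 0 ≤ (v - 1) * c ^ 2 := mul_nonneg (by linarith) (sq_nonneg c)
  have weight_a : 0 ≤ (v - 1) * a ^ 2 := mul_nonneg (by linarith) (sq_nonneg a)
  nlinarith [sq_nonneg (a + 4 * b), sq_nonneg (b + 4 * c), sq_nonneg (b + 4 * d)]

section CutoffError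

variable {η η' η'' ε : ℝ} (u a : ℝ)

theorem arclengthDensity_mul_sq_deriv_cutoff_le (hη' : |η'| ≤ 2 * ε) (hε : ε ≤ 1) :
    arclengthDensity u * ((slopeSine u - slopeSine a) * η' ^ 2) ^ 2 ≤ 64 * (ε * |u - a|) := by
  have hε0 : 0 ≤ ε := by linarith [abs_nonneg η']
  have hη'4 : η' ^ 4 ≤ 16 * ε := by
    calc η' ^ 4 = |η'| ^ 4 := (Even.pow_abs (by decide) η').symm
      _ ≤ (2 * ε) ^ 4 := by gcongr
      _ = 16 * ε ^ 4 := by ring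
      _ ≤ 16 * ε := by gcongr; exact pow_le_of_le_one hε0 hε (by norm_num)
  calc arclengthDensity u * ((slopeSine u - slopeSine a) * η' ^ 2) ^ 2
      = arclengthDensity u * (slopeSine u - slopeSine a) ^ 2 * η' ^ 4 := by ring
    _ ≤ 4 * |u - a| * (16 * ε) :=
        mul_le_mul (arclengthDensity_mul_slopeSine_sub_sq_le u a) hη'4 (by positivity)
          (by positivity)
    _ = 64 * (ε * |u - a|) := by ring

theorem sq_deriv_deriv_cutoff_le (hη : η ∈ Icc 0 1) (hη'' : |η''| ≤ 2 * ε ^ 2) (hε0 : 0 ≤ ε)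
    (hε : ε ≤ 1) : ((slopeSine u - slopeSine a) * η * η'') ^ 2 ≤ 16 * (ε * |u - a|) := by
  have hηη'' : (η * η'') ^ 2 ≤ 4 * ε := by
    calc (η * η'') ^ 2 = η ^ 2 * |η''| ^ 2 := by rw [mul_pow, sq_abs]
      _ ≤ 1 * (2 * ε ^ 2) ^ 2 := by gcongr; exact pow_le_one₀ hη.1 hη.2
      _ = 4 * ε ^ 4 := by ring
      _ ≤ 4 * ε := by gcongr; exact pow_le_of_le_one hε0 hε (by norm_num)
  calc ((slopeSine u - slopeSine a) * η * η'') ^ 2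
      = (slopeSine u - slopeSine a) ^ 2 * (η * η'') ^ 2 := by ring
    _ ≤ 4 * |u - a| * (4 * ε) :=
        mul_le_mul (slopeSine_sub_sq_le u a) hηη'' (sq_nonneg _) (by positivity)
    _ = 16 * (ε * |u - a|) := by ring

theorem abs_deriv_cutoff_mul_le {w M : ℝ} (hη : η ∈ Icc 0 1) (hη' : |η'| ≤ 2 * ε)
    (hw : |w| ≤ M) :
    |η ^ 3 * η' * (w * (slopeSine u - slopeSine a))| ≤ 4 * (M * (ε * |u - a|)) := by
  have hε0 : 0 ≤ ε := by linarith [abs_nonneg η']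
  have hM : 0 ≤ M := (abs_nonneg w).trans hw
  calc |η ^ 3 * η' * (w * (slopeSine u - slopeSine a))|
      = η ^ 3 * |η'| * (|w| * |slopeSine u - slopeSine a|) := by
        rw [abs_mul, abs_mul, abs_mul, abs_of_nonneg (pow_nonneg hη.1 3)]
    _ ≤ 1 * (2 * ε) * (M * (2 * |u - a|)) := by
        gcongr
        exacts [pow_le_one₀ hη.1 hη.2, abs_slopeSine_sub_le u a]
    _ = 4 * (M * (ε * |u - a|)) := by ring

end CutoffError

namespace IsProfileSolution

theorem of_contDiff {φ v k : ℝ → ℝ} (hφ : ContDiff ℝ 4 φ)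
    (hv : ∀ x, v x = √(1 + deriv φ x ^ 2)) (hk : ∀ x, k x = deriv (deriv φ) x / v x ^ 3)
    (hprofile : ∀ x, (φ x - x * deriv φ x) / 4 = -deriv (fun t => deriv k t / v t) x) :
    IsProfileSolution φ (deriv φ) k (fun t => deriv k t / v t) := by
  have hv0 : ∀ x, v x ≠ 0 := fun x => hv x ▸ (arclengthDensity_pos (deriv φ x)).ne'
  have hφ' : ContDiff ℝ 3 (deriv φ) := hφ.deriv'
  have hφ'' : ContDiff ℝ 2 (deriv (deriv φ)) := hφ'.deriv'
  have hv3 : ContDiff ℝ 3 v := by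
    rw [funext hv]
    exact (contDiff_const.add (hφ'.pow 2)).sqrt fun x => by positivity
  have hk2 : ContDiff ℝ 2 k := by
    rw [funext hk]
    exact hφ''.div ((hv3.of_le (by norm_num)).pow 3) fun x => pow_ne_zero 3 (hv0 x)
  have hp1 : ContDiff ℝ 1 fun t => deriv k t / v t :=
    hk2.deriv'.div (hv3.of_le (by norm_num)) hv0
  have hasDerivAt_deriv {n : WithTop ℕ∞} {f : ℝ → ℝ} (hf : ContDiff ℝ n f) (hn : n ≠ 0) (x : ℝ) :
      HasDerivAt f (deriv f x) x :=
    (hf.differentiable hn x).hasDerivAt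
  refine ⟨hasDerivAt_deriv hφ (by norm_num), fun x => ?_, fun x => ?_, fun x => ?_⟩
  · refine (hasDerivAt_deriv hφ' (by norm_num) x).congr_deriv ?_
    rw [hk, arclengthDensity, ← hv, div_mul_cancel₀ _ (pow_ne_zero 3 (hv0 x))]
  · refine (hasDerivAt_deriv hk2 (by norm_num) x).congr_deriv ?_
    rw [arclengthDensity, ← hv, mul_div_cancel₀ _ (hv0 x)]
  · exact (hasDerivAt_deriv hp1 (by norm_num) x).congr_deriv (by linarith [hprofile x])

variable {φ u k p : ℝ → ℝ} (hsol : IsProfileSolution φ u k p) (a : ℝ)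

include hsol

theorem hasDerivAt_sub_linear (x : ℝ) : HasDerivAt (fun x => φ x - a * x) (u x - a) x :=
  ((hsol.hasDerivAt_profile x).sub ((hasDerivAt_id x).const_mul a)).congr_deriv (by simp)

theorem hasDerivAt_slopeSine_sub (x : ℝ) :
    HasDerivAt (fun x => slopeSine (u x) - slopeSine a) (k x) x := by
  have hF := (arclengthDensity_pos (u x)).ne'
  refine (((hasDerivAt_slopeSine (u x)).comp x
    (hsol.hasDerivAt_slope x)).sub_const _).congr_deriv ?_
  field_simp

theorem hasDerivAt_bregman_right (x : ℝ) :
    HasDerivAt (fun x => arclengthBregman a (u x)) (k x * (u x - a)) x := by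
  have hF := (arclengthDensity_pos (u x)).ne'
  refine ((hasDerivAt_arclengthBregman_right (u x) a).comp x
    (hsol.hasDerivAt_slope x)).congr_deriv ?_
  field_simp

theorem continuous_slope : Continuous u :=
  continuous_iff_continuousAt.2 fun x => (hsol.hasDerivAt_slope x).continuousAt

theorem continuous_bregman : Continuous fun x => arclengthBregman (u x) a := by
  have hF : Continuous arclengthDensity :=
    continuous_iff_continuousAt.2 fun y => (hasDerivAt_arclengthDensity y).continuousAt
  have := hsol.continuous_slope
  unfold arclengthBregman
  fun_prop

theorem hasDerivAt_energyFlux (x : ℝ) :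
    HasDerivAt (energyFlux φ u k p a)
      (4 * arclengthDensity (u x) * p x ^ 2 + arclengthBregman (u x) a) x := by
  have hpk := ((hsol.hasDerivAt_curvature_arclength x).mul
    (hsol.hasDerivAt_curvature x)).const_mul 4
  have hwh := (hsol.hasDerivAt_sub_linear a x).mul (hsol.hasDerivAt_slopeSine_sub a x)
  have hxD := (hasDerivAt_id x).mul (hsol.hasDerivAt_bregman_right a x)
  refine ((hpk.add hwh).sub hxD).congr_deriv ?_
  simp only [id]
  linear_combination -arclengthBregman_add_swap (u x) a

theorem hasDerivAt_localizedFlux {η η' : ℝ → ℝ} {η'' x : ℝ} (hη : HasDerivAt η (η' x) x)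
    (hη' : HasDerivAt η' η'' x) :
    HasDerivAt (localizedFlux φ u k p a η η')
      ((4 * arclengthDensity (u x) * p x ^ 2 + arclengthBregman (u x) a) * η x ^ 4
        + energyFlux φ u k p a x * (4 * η x ^ 3 * η' x)
        + 64 * ((k x ^ 2
            + (slopeSine (u x) - slopeSine a) * (arclengthDensity (u x) * p x)) * (η x * η' x) ^ 2
          + (slopeSine (u x) - slopeSine a) * k x
            * (2 * (η x * η' x) * (η' x ^ 2 + η x * η'')))) x := by
  have hJ := (hsol.hasDerivAt_energyFlux a x).mul (hη.pow 4)
  have hhk := (((hsol.hasDerivAt_slopeSine_sub a x).mul (hsol.hasDerivAt_curvature x)).mul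
    ((hη.mul hη').pow 2)).const_mul 64
  refine (hJ.add hhk).congr_deriv ?_
  simp only [Pi.mul_apply, Pi.pow_apply]
  push_cast
  ring

variable {a}

theorem le_deriv_localizedFlux {M ε η'' x : ℝ} {η η' : ℝ → ℝ} (hη : HasDerivAt η (η' x) x)
    (hη' : HasDerivAt η' η'' x) (hη01 : η x ∈ Icc 0 1) (hη'x : x * η' x ≤ 0)
    (hη'_le : |η' x| ≤ 2 * ε) (hη''_le : |η''| ≤ 2 * ε ^ 2) (hε : ε ≤ 1)
    (hM : |φ x - a * x| ≤ M) :
    arclengthBregman (u x) a * η x ^ 4 - 16 * (M + 3328) * ε * |u x - a|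
      ≤ deriv (localizedFlux φ u k p a η η') x := by
  have good_sign : 0 ≤ -(x * η' x) * (η x ^ 3 * arclengthBregman a (u x)) :=
    mul_nonneg (neg_nonneg.2 hη'x)
      (mul_nonneg (pow_nonneg hη01.1 3) (arclengthBregman_nonneg _ _))
  have absorbed := neg_error_le_dissipation (one_le_arclengthDensity (u x))
    (p x * η x ^ 2) (k x * η x * η' x) ((slopeSine (u x) - slopeSine a) * η' x ^ 2)
    ((slopeSine (u x) - slopeSine a) * η x * η'')
  have first_order := arclengthDensity_mul_sq_deriv_cutoff_le (u x) a hη'_le hε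
  have second_order := sq_deriv_deriv_cutoff_le (u x) a hη01 hη''_le
    (by linarith [abs_nonneg (η' x)]) hε
  have position := neg_le_of_abs_le (abs_deriv_cutoff_mul_le (u x) a hη01 hη'_le hM)
  rw [(hsol.hasDerivAt_localizedFlux a hη hη').deriv, energyFlux]
  -- `16 * 3328 = 768 * 64 + 256 * 16` collects the two curvature errors.
  linarith

theorem integral_bregman_mul_cutoff_sub_le {M : ℝ} (hM : ∀ x, |φ x - a * x| ≤ M) {R : ℝ}
    (hR : 1 ≤ R) :
    ∫ x in (-R)..R,
      (arclengthBregman (u x) a * cutoff R x ^ 4 - 16 * (M + 3328) * R⁻¹ * |u x - a|) ≤ 0 := by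
  have hR0 : 0 < R := by linarith
  have hcont : Continuous fun x =>
      arclengthBregman (u x) a * cutoff R x ^ 4 - 16 * (M + 3328) * R⁻¹ * |u x - a| := by
    have := hsol.continuous_bregman a
    have := hsol.continuous_slope
    have := continuous_cutoff R
    fun_prop
  have hflux (x : ℝ) := (hsol.hasDerivAt_localizedFlux a (hasDerivAt_cutoff R x)
    (hasDerivAt_deriv_cutoff R x)).differentiableAt.hasDerivAt
  have flux_eq_zero (x : ℝ) (hx : |x| = R) :
      localizedFlux φ u k p a (cutoff R) (fun x => -2 * x / R ^ 2) x = 0 := by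
    simp [localizedFlux, cutoff_of_abs_eq hR0 hx]
  refine (intervalIntegral.integral_le_sub_of_hasDeriv_right_of_le (by linarith)
    (fun x _ => (hflux x).continuousAt.continuousWithinAt)
    (fun x _ => (hflux x).hasDerivWithinAt) hcont.integrableOn_Icc fun x hx => ?_).trans_eq ?_
  · have hxR : |x| ≤ R := abs_le.2 ⟨hx.1.le, hx.2.le⟩
    exact hsol.le_deriv_localizedFlux (hasDerivAt_cutoff R x) (hasDerivAt_deriv_cutoff R x)
      (cutoff_mem_Icc hxR) (mul_deriv_cutoff_nonpos R x) (abs_deriv_cutoff_le hR0 hxR)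
      (by simp [div_eq_mul_inv]) (inv_le_one_of_one_le₀ hR) (hM x)
  · rw [flux_eq_zero R (abs_of_pos hR0), flux_eq_zero (-R) (by rw [abs_neg, abs_of_pos hR0]),
      sub_zero]

theorem integral_bregman_mul_cutoff_le (hint : Integrable fun x => u x - a) {M : ℝ}
    (hM : ∀ x, |φ x - a * x| ≤ M) {R : ℝ} (hR : 1 ≤ R) :
    ∫ x in (-R)..R, arclengthBregman (u x) a * cutoff R x ^ 4
      ≤ 16 * (M + 3328) * (∫ x, |u x - a|) / R := by
  have hM0 : 0 ≤ M := (abs_nonneg _).trans (hM 0)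
  have hmain : Continuous fun x => arclengthBregman (u x) a * cutoff R x ^ 4 :=
    (hsol.continuous_bregman a).mul ((continuous_cutoff R).pow 4)
  have difference := hsol.integral_bregman_mul_cutoff_sub_le hM hR
  rw [intervalIntegral.integral_sub (hmain.intervalIntegrable _ _)
    (hint.abs.const_mul _).intervalIntegrable, sub_nonpos] at difference
  calc ∫ x in (-R)..R, arclengthBregman (u x) a * cutoff R x ^ 4
      ≤ ∫ x in (-R)..R, 16 * (M + 3328) * R⁻¹ * |u x - a| := difference
    _ = 16 * (M + 3328) * R⁻¹ * ∫ x in Ioc (-R) R, |u x - a| := by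
        rw [intervalIntegral.integral_const_mul, intervalIntegral.integral_of_le (by linarith)]
    _ ≤ 16 * (M + 3328) * R⁻¹ * ∫ x, |u x - a| :=
        mul_le_mul_of_nonneg_left
          (setIntegral_le_integral hint.abs (ae_of_all _ fun x => abs_nonneg _)) (by positivity)
    _ = 16 * (M + 3328) * (∫ x, |u x - a|) / R := by ring

theorem slope_eq (hint : Integrable fun x => u x - a) (x : ℝ) : u x = a := by
  obtain ⟨M, hM⟩ := exists_norm_le_of_hasDerivAt_of_integrable (hsol.hasDerivAt_sub_linear a) hint
  have bregman_eq_zero : arclengthBregman (u x) a = 0 :=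
    eq_zero_of_integral_mul_cutoff_le (hsol.continuous_bregman a)
      (fun y => arclengthBregman_nonneg (u y) a)
      (fun R hR => hsol.integral_bregman_mul_cutoff_le hint hM hR) x
  by_contra hne
  exact (arclengthBregman_pos hne).ne' bregman_eq_zero

theorem eq_linear (hint : Integrable fun x => u x - a) (x : ℝ) : φ x = a * x := by
  have hu : u = fun _ => a := funext (hsol.slope_eq hint)
  have hk : k = fun _ => 0 := funext fun y => by
    have h := (hsol.hasDerivAt_slope y).unique (hu ▸ hasDerivAt_const y a)
    simpa [(arclengthDensity_pos _).ne'] using h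
  have hp : p = fun _ => 0 := funext fun y => by
    have h := (hsol.hasDerivAt_curvature y).unique (hk ▸ hasDerivAt_const y (0 : ℝ))
    simpa [(arclengthDensity_pos _).ne'] using h
  have h := (hsol.hasDerivAt_curvature_arclength x).unique (hp ▸ hasDerivAt_const x (0 : ℝ))
  rw [hu] at h
  linarith

end IsProfileSolution

end SurfaceDiffusion

theorem stmt_10_general (φ v k : ℝ → ℝ) (hφ : ContDiff ℝ 4 φ)
    (hv : ∀ x, v x = Real.sqrt (1 + deriv φ x ^ 2))
    (hk : ∀ x, k x = deriv (deriv φ) x / v x ^ 3)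
    (hprofile : ∀ x : ℝ,
      (φ x - x * deriv φ x) / 4 = -deriv (fun t => deriv k t / v t) x)
    (a₀ : ℝ)
    (hint : MeasureTheory.Integrable (fun τ => deriv φ τ - a₀)) :
    ∀ x₁ : ℝ, φ x₁ = a₀ * x₁ :=
  (SurfaceDiffusion.IsProfileSolution.of_contDiff hφ hv hk hprofile).eq_linear hint

/-- If a graph-like forward self-similar profile `φ` is globally Lipschitz
(`φ'` bounded) and `φ' - a₀` is integrable on `ℝ`, then `φ(x₁) = a₀ x₁`. -/
theorem stmt_10 (φ v k : ℝ → ℝ) (hφ : ContDiff ℝ (⊤ : ℕ∞) φ)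
    (hv : ∀ x, v x = Real.sqrt (1 + deriv φ x ^ 2))
    (hk : ∀ x, k x = deriv (deriv φ) x / v x ^ 3)
    (hprofile : ∀ x : ℝ,
      (φ x - x * deriv φ x) / 4 = -deriv (fun t => deriv k t / v t) x)
    (K : ℝ) (hLip : ∀ x : ℝ, |deriv φ x| ≤ K)
    (a₀ : ℝ)
    (hint : MeasureTheory.Integrable (fun τ => deriv φ τ - a₀)) :
    ∀ x₁ : ℝ, φ x₁ = a₀ * x₁ :=
  stmt_10_general φ v k (contDiff_infty.1 hφ 4) hv hk hprofile a₀ hint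
end
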